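/- arXiv:2011.12480 — 3 statements merged into one kernel-verified Lean document; each statement's English description precedes it below -/
import Mathlib

section
/- Let G = (V,E) be a simple graph, v₀ ∈ V, τ ≥ 1, and write δ'(v) for the closed neighborhood of v (v together with its adjacent vertices). Let x : {0,…,τ} × V → {0,1} and y : {0,…,τ−1} × E' → {0,1} (where y^t_{uv} is defined for v ∈ δ'(u)) satisfy: (i) x⁰_{v₀} = 1; (ii) for every 0 ≤ t < τ and every v ∈ V, x^t_v = Σ_{i ∈ δ'(v)} y^t_{v i}; (iii) for every 0 < t ≤ τ and every v ∈ V, x^t_v = Σ_{j ∈ δ'(v)} y^{t−1}_{j v}; and (iv) Σ_{v ∈ V} x^τ_v = 1. Then for every t ∈ {0,…,τ} there is exactly one vertex π^t with x^t_{π^t} = 1, and the sequence (π⁰,…,π^τ) is a search path of length τ starting at v₀. Conversely, for every search path (π⁰,…,π^τ) starting at v₀ there exist binary x, y satisfying (i)–(iv) with x^t_v = 1 exactly when v = π^t. -/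
theorem exists_of_binary_sum_one {V : Type*} [Fintype V] [DecidableEq V] (f : V → ℝ)
    (hb : ∀ v, f v = 0 ∨ f v = 1) (hs : ∑ v, f v = 1) : ∃ p, ∀ v, f v = 1 ↔ v = p := by
  have hex : ∃ p, f p ≠ 0 := by
    by_contra! h
    simp [h] at hs
  obtain ⟨p, hp⟩ := hex
  have hp1 : f p = 1 := (hb p).resolve_left hp
  refine ⟨p, fun v => ⟨fun hv => ?_, fun h => h ▸ hp1⟩⟩
  by_contra hne
  have h0 : ∀ u, 0 ≤ f u := fun u => by rcases hb u with h | h <;> simp [h]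
  have h2 : ∑ u ∈ ({v, p} : Finset V), f u ≤ ∑ u, f u :=
    Finset.sum_le_sum_of_subset_of_nonneg (Finset.subset_univ _) (fun u _ _ => h0 u)
  rw [Finset.sum_pair hne, hs, hv, hp1] at h2
  norm_num at h2

/-- The MILP path constraints (unit start, flow conservation through closed
neighborhoods, and unit flow into the dummy goal at time `τ`) on binary variables
`x`, `y` characterize exactly the search paths of length `τ` starting at `v₀`:
a search path is a vertex sequence in which at each step the searcher stays put or
moves along an edge. -/
theorem milp_path_constraints_characterize_search_paths
    {V : Type*} [Fintype V] [DecidableEq V]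
    (G : SimpleGraph V) [DecidableRel G.Adj]
    (v₀ : V) (τ : ℕ) (hτ : 1 ≤ τ) :
    -- closed neighborhood δ'(v)
    ∀ nbhd : V → Finset V, (∀ v, nbhd v = insert v (G.neighborFinset v)) →
    ( -- forward direction: any binary solution of (i)-(iv) encodes a search path
      (∀ (x : ℕ → V → ℝ) (y : ℕ → V → V → ℝ),
        (∀ t ≤ τ, ∀ v, x t v = 0 ∨ x t v = 1) →
        (∀ t < τ, ∀ u v, y t u v = 0 ∨ y t u v = 1) →
        (∀ t < τ, ∀ u : V, ∀ v ∉ nbhd u, y t u v = 0) →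
        -- (i) the searcher starts at v₀
        x 0 v₀ = 1 →
        -- (ii) outgoing flow
        (∀ t < τ, ∀ v : V, x t v = ∑ i ∈ nbhd v, y t v i) →
        -- (iii) incoming flow
        (∀ t, 0 < t → t ≤ τ → ∀ v : V, x t v = ∑ j ∈ nbhd v, y (t - 1) j v) →
        -- (iv) unit flow into the dummy goal
        (∑ v : V, x τ v = 1) →
        ∃ π : ℕ → V,
          (∀ t ≤ τ, ∀ v : V, (x t v = 1 ↔ v = π t)) ∧
          π 0 = v₀ ∧
          (∀ t < τ, π (t + 1) = π t ∨ G.Adj (π t) (π (t + 1)))) ∧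
      -- converse: every search path is encoded by a binary solution of (i)-(iv)
      (∀ π : ℕ → V, π 0 = v₀ →
        (∀ t < τ, π (t + 1) = π t ∨ G.Adj (π t) (π (t + 1))) →
        ∃ (x : ℕ → V → ℝ) (y : ℕ → V → V → ℝ),
          (∀ t ≤ τ, ∀ v, x t v = 0 ∨ x t v = 1) ∧
          (∀ t < τ, ∀ u v, y t u v = 0 ∨ y t u v = 1) ∧
          (∀ t < τ, ∀ u : V, ∀ v ∉ nbhd u, y t u v = 0) ∧
          x 0 v₀ = 1 ∧
          (∀ t < τ, ∀ v : V, x t v = ∑ i ∈ nbhd v, y t v i) ∧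
          (∀ t, 0 < t → t ≤ τ → ∀ v : V, x t v = ∑ j ∈ nbhd v, y (t - 1) j v) ∧
          (∑ v : V, x τ v = 1) ∧
          (∀ t ≤ τ, ∀ v : V, (x t v = 1 ↔ v = π t)))) := by
  intro nbhd hn
  have hmem : ∀ u v, v ∈ nbhd u ↔ (v = u ∨ G.Adj u v) := by
    intro u v
    simp [hn]
  have hsymm : ∀ u v, v ∈ nbhd u ↔ u ∈ nbhd v := by
    intro u v
    rw [hmem, hmem, G.adj_comm, eq_comm]
  refine ⟨?_, ?_⟩
  · intro x y hx hy hy0 h0 hout hin hfin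
    have hout' : ∀ t < τ, ∀ v, x t v = ∑ i, y t v i := by
      intro t ht v
      rw [hout t ht v]
      exact Finset.sum_subset (Finset.subset_univ _) (fun i _ hi => hy0 t ht v i hi)
    have hin' : ∀ t < τ, ∀ v, x (t + 1) v = ∑ j, y t j v := by
      intro t ht v
      rw [hin (t + 1) (Nat.succ_pos t) ht v, Nat.add_sub_cancel]
      exact Finset.sum_subset (Finset.subset_univ _)
        (fun j _ hj => hy0 t ht j v (fun h => hj ((hsymm j v).1 h)))
    have hstep : ∀ t < τ, ∑ v, x t v = ∑ v, x (t + 1) v := by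
      intro t ht
      rw [Finset.sum_congr rfl (fun v _ => hout' t ht v),
        Finset.sum_congr rfl (fun v _ => hin' t ht v), Finset.sum_comm]
    have hsum : ∀ t ≤ τ, ∑ v, x t v = 1 := by
      intro t ht
      induction ht using Nat.decreasingInduction with
      | of_succ t ht ih => rw [hstep t ht, ih]
      | self => exact hfin
    have hex : ∀ t, ∃ p, t ≤ τ → ∀ v, x t v = 1 ↔ v = p := by
      intro t
      by_cases ht : t ≤ τ
      · obtain ⟨p, hp⟩ := exists_of_binary_sum_one (x t) (hx t ht) (hsum t ht)
        exact ⟨p, fun _ => hp⟩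
      · exact ⟨v₀, fun h => absurd h ht⟩
    choose π hπ using hex
    refine ⟨π, hπ, ((hπ 0 (Nat.zero_le _) v₀).1 h0).symm, ?_⟩
    intro t ht
    have h1 : x t (π t) = 1 := (hπ t ht.le _).2 rfl
    have hi : ∃ i ∈ nbhd (π t), y t (π t) i ≠ 0 := by
      apply Finset.exists_ne_zero_of_sum_ne_zero
      rw [← hout t ht, h1]
      exact one_ne_zero
    obtain ⟨i, hi, hyi⟩ := hi
    have hy1 : y t (π t) i = 1 := (hy t ht _ _).resolve_left hyi
    have hle : y t (π t) i ≤ x (t + 1) i := by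
      rw [hin' t ht i]
      exact Finset.single_le_sum (f := fun j => y t j i)
        (fun j _ => by rcases hy t ht j i with h | h <;> simp [h]) (Finset.mem_univ _)
    have hx1 : x (t + 1) i = 1 := by
      rcases hx (t + 1) ht i with h | h
      · rw [h, hy1] at hle
        norm_num at hle
      · exact h
    have := (hπ (t + 1) ht i).1 hx1
    rw [← this]
    exact (hmem _ _).1 hi
  · intro π h0 hπ
    have hm : ∀ t < τ, π (t + 1) ∈ nbhd (π t) := fun t ht => (hmem _ _).2 (hπ t ht)
    refine ⟨fun t v => if v = π t then 1 else 0,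
      fun t u v => if u = π t ∧ v = π (t + 1) then 1 else 0, ?_, ?_, ?_, ?_, ?_, ?_, ?_, ?_⟩
    · intro t _ v
      by_cases h : v = π t <;> simp [h]
    · intro t _ u v
      by_cases h : u = π t ∧ v = π (t + 1)
      · exact Or.inr (if_pos h)
      · exact Or.inl (if_neg h)
    · intro t ht u v hv
      refine if_neg ?_
      rintro ⟨rfl, rfl⟩
      exact hv (hm t ht)
    · simp [h0]
    · intro t ht v
      by_cases h : v = π t
      · subst h
        simp [hm t ht]
      · simp [h]
    · intro t ht0 ht v
      obtain ⟨s, rfl⟩ : ∃ s, t = s + 1 := ⟨t - 1, by omega⟩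
      by_cases h : v = π (s + 1)
      · subst h
        simp [(hsymm _ _).1 (hm s ht)]
      · simp [h]
    · simp
    · intro t _ v
      by_cases h : v = π t <;> simp [h]
end

section
/- Fix an integer n ≥ 2 and γ ∈ (0,1]. For every sequence w = (w_0,…,w_{n−1}) of vertices from {1,…,n} with w_0 = 1 (not necessarily injective), the discounted reward satisfies F(w) ≤ B; moreover F(w) = B if and only if w is injective and w_{n−1} = n. In particular, the maximum discounted reward over length-(n−1) searcher trajectories starting at vertex 1 is attained exactly by those that visit every vertex exactly once and visit the lowest-probability vertex n last. -/
/-- The initial target-location belief of the 2HP reduction on vertices `1, …, n`: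
`b(1) = 0`, `b(n) = 1/(n−1)²`, and `b(v) = c := 1/(n−1) + 1/(n−1)²` otherwise. -/
noncomputable def bfun (n : ℕ) (v : ℕ) : ℝ :=
  if v = 1 then 0
  else if v = n then 1 / ((n : ℝ) - 1) ^ 2
  else 1 / ((n : ℝ) - 1) + 1 / ((n : ℝ) - 1) ^ 2

/-- The discounted reward of a searcher trajectory `w₀, …, w_{n−1}`:
`F(w) = Σ_{t=0}^{n−1} γᵗ Σ_{v ∈ {w₀,…,w_t}} b(v)`, each distinct visited vertex
counted once. -/
noncomputable def reward (n : ℕ) (γ : ℝ) (b : ℕ → ℝ) (w : ℕ → ℕ) : ℝ :=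
  ∑ t ∈ Finset.range n, γ ^ t * ∑ v ∈ Finset.image w (Finset.range (t + 1)), b v

/-- The bound value `B = Σ_{t=0}^{n−2} γᵗ·t·c + γ^{n−1}·((n−2)·c + 1/(n−1)²)`. -/
noncomputable def Bval (n : ℕ) (γ : ℝ) : ℝ :=
  (∑ t ∈ Finset.range (n - 1),
      γ ^ t * t * (1 / ((n : ℝ) - 1) + 1 / ((n : ℝ) - 1) ^ 2)) +
    γ ^ (n - 1) *
      (((n : ℝ) - 2) * (1 / ((n : ℝ) - 1) + 1 / ((n : ℝ) - 1) ^ 2) +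
        1 / ((n : ℝ) - 1) ^ 2)

/-- Closed formula for the collected belief over a set containing vertex `1`. -/
lemma sum_bfun (n : ℕ) (hn : n ≠ 1) (A : Finset ℕ) (h1 : 1 ∈ A) :
    ∑ v ∈ A, bfun n v = ((A.card : ℝ) - 1) * (1 / ((n : ℝ) - 1) + 1 / ((n : ℝ) - 1) ^ 2)
      - if n ∈ A then 1 / ((n : ℝ) - 1) else 0 := by
  have hb : ∀ v, bfun n v = (1 / ((n : ℝ) - 1) + 1 / ((n : ℝ) - 1) ^ 2)
      - (if v = 1 then (1 / ((n : ℝ) - 1) + 1 / ((n : ℝ) - 1) ^ 2) else 0)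
      - (if v = n then 1 / ((n : ℝ) - 1) else 0) := by
    intro v
    unfold bfun
    by_cases h : v = 1
    · subst h; simp [hn.symm]
    · by_cases h' : v = n <;> simp [h, h', hn]
  simp only [hb, Finset.sum_sub_distrib, Finset.sum_ite_eq', h1, if_true, Finset.sum_const,
    nsmul_eq_mul]
  ring

/-- For every (not necessarily injective) sequence `w₀, …, w_{n−1}` of vertices from
`{1, …, n}` with `w₀ = 1`, the discounted reward satisfies `F(w) ≤ B`, with equality
iff `w` is injective and `w_{n−1} = n`: the maximum is attained exactly by the
trajectories visiting every vertex exactly once with the lowest-probability vertex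
`n` last. -/
theorem reward_le_B_iff_hamiltonian_ordering (n : ℕ) (hn : 2 ≤ n)
    (γ : ℝ) (hγ : γ ∈ Set.Ioc (0 : ℝ) 1)
    (w : ℕ → ℕ)
    (hw_range : ∀ t < n, w t ∈ Finset.Icc 1 n)
    (hw0 : w 0 = 1) :
    reward n γ (bfun n) w ≤ Bval n γ ∧
    (reward n γ (bfun n) w = Bval n γ ↔
      ((∀ s < n, ∀ t < n, w s = w t → s = t) ∧ w (n - 1) = n)) := by
  obtain ⟨hγ0, hγ1⟩ := hγ
  obtain ⟨k, rfl⟩ : ∃ k, n = k + 1 := ⟨n - 1, by omega⟩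
  have hk : 1 ≤ k := by omega
  have hkR : (1 : ℝ) ≤ k := by exact_mod_cast hk
  set e : ℝ := 1 / (((k + 1 : ℕ) : ℝ) - 1) with he
  have he0 : 0 < e := by rw [he]; push_cast; apply one_div_pos.2; linarith
  have hd : 1 / (((k + 1 : ℕ) : ℝ) - 1) ^ 2 = e ^ 2 := by rw [he]; simp
  set A : ℕ → Finset ℕ := fun t => Finset.image w (Finset.range (t + 1)) with hA
  have h1A : ∀ t, 1 ∈ A t := fun t => by
    simp only [hA, Finset.mem_image, Finset.mem_range]
    exact ⟨0, by omega, hw0⟩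
  have hcard : ∀ t, (A t).card ≤ t + 1 := fun t => by
    simpa using (Finset.card_image_le (s := Finset.range (t + 1)) (f := w))
  have hsub : A k ⊆ Finset.Icc 1 (k + 1) := by
    intro v hv
    simp only [hA, Finset.mem_image, Finset.mem_range] at hv
    obtain ⟨s, hs, rfl⟩ := hv
    exact hw_range s hs
  have hS : ∀ t, ∑ v ∈ A t, bfun (k + 1) v
      = (((A t).card : ℝ) - 1) * (e + e ^ 2) - if k + 1 ∈ A t then e else 0 := by
    intro t
    rw [sum_bfun (k + 1) (by omega) (A t) (h1A t), hd]
  set g : ℕ → ℝ := fun t => t * (e + e ^ 2) - if t = k then e else 0 with hg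
  have hB : Bval (k + 1) γ = ∑ t ∈ Finset.range (k + 1), γ ^ t * g t := by
    unfold Bval
    rw [Finset.sum_range_succ, hd, ← he]
    simp only [Nat.add_sub_cancel]
    congr 1
    · apply Finset.sum_congr rfl
      intro t ht
      have : t ≠ k := (Finset.mem_range.1 ht).ne
      simp only [hg, this, if_false]
      ring
    · simp only [hg, if_true]
      push_cast
      ring
  have hc0 : 0 < e + e ^ 2 := by positivity
  -- strictness for the last set
  have hnot : k + 1 ∉ A k → (A k).card ≤ k := by
    intro h
    have h2 : A k ⊆ Finset.Icc 1 k := by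
      intro v hv
      have h3 := Finset.mem_Icc.1 (hsub hv)
      have : v ≠ k + 1 := by rintro rfl; exact h hv
      exact Finset.mem_Icc.2 ⟨h3.1, by omega⟩
    simpa using Finset.card_le_card h2
  have hle : ∀ t, ∑ v ∈ A t, bfun (k + 1) v ≤ g t := by
    intro t
    rw [hS]
    have h2 : (((A t).card : ℝ) - 1) ≤ t := by
      have : ((A t).card : ℝ) ≤ t + 1 := by exact_mod_cast hcard t
      linarith
    have h3 := mul_le_mul_of_nonneg_right h2 hc0.le
    simp only [hg]
    by_cases htk : t = k
    · subst htk
      by_cases h : t + 1 ∈ A t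
      · simp only [h, if_true]; linarith
      · have h4 : ((A t).card : ℝ) ≤ t := by exact_mod_cast hnot h
        have h5 := mul_le_mul_of_nonneg_right h4 hc0.le
        simp only [h, if_true, if_false]
        nlinarith [sq_nonneg e]
    · simp only [htk, if_false]
      split_ifs <;> linarith
  have hterm : ∀ t ∈ Finset.range (k + 1),
      γ ^ t * ∑ v ∈ A t, bfun (k + 1) v ≤ γ ^ t * g t := fun t _ =>
    mul_le_mul_of_nonneg_left (hle t) (pow_pos hγ0 t).le
  have hR : reward (k + 1) γ (bfun (k + 1)) w
      = ∑ t ∈ Finset.range (k + 1), γ ^ t * ∑ v ∈ A t, bfun (k + 1) v := rfl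
  rw [hR, hB]
  refine ⟨Finset.sum_le_sum hterm, ?_⟩
  rw [Finset.sum_eq_sum_iff_of_le hterm]
  simp only [Nat.add_sub_cancel]
  constructor
  · intro H
    have H' : ∀ t < k + 1, ∑ v ∈ A t, bfun (k + 1) v = g t := fun t ht =>
      mul_left_cancel₀ (pow_pos hγ0 t).ne' (H t (Finset.mem_range.2 ht))
    have Hk := H' k (by omega)
    have Hk1 := H' (k - 1) (by omega)
    rw [hS] at Hk Hk1
    have hne : k - 1 ≠ k := by omega
    simp only [hg, if_true, hne, if_false] at Hk Hk1
    have hmem : k + 1 ∈ A k := by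
      by_contra h
      have h4 : ((A k).card : ℝ) ≤ k := by exact_mod_cast hnot h
      have h5 := mul_le_mul_of_nonneg_right h4 hc0.le
      simp only [h, if_false] at Hk
      nlinarith [sq_pos_of_pos he0]
    simp only [hmem, if_true] at Hk
    have hc : ((A k).card : ℝ) - 1 = k := mul_right_cancel₀ hc0.ne' (by linarith)
    have hc' : (A k).card = (Finset.range (k + 1)).card := by
      rw [Finset.card_range]
      have : ((A k).card : ℝ) = ((k + 1 : ℕ) : ℝ) := by push_cast; linarith
      exact_mod_cast this
    have hinj := Finset.card_image_iff.1 hc'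
    have hnm : k + 1 ∉ A (k - 1) := by
      intro h
      simp only [h, if_true] at Hk1
      have h2 : (((A (k - 1)).card : ℝ) - 1) ≤ ((k - 1 : ℕ) : ℝ) := by
        have : ((A (k - 1)).card : ℝ) ≤ ((k - 1 : ℕ) : ℝ) + 1 := by exact_mod_cast hcard (k - 1)
        linarith
      have h3 := mul_le_mul_of_nonneg_right h2 hc0.le
      linarith
    refine ⟨fun s hs t ht hst => hinj (by simpa using hs) (by simpa using ht) hst, ?_⟩
    simp only [hA, Finset.mem_image, Finset.mem_range] at hmem hnm
    obtain ⟨s, hs, hws⟩ := hmem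
    by_cases hsk : s = k
    · rw [← hsk]; rw [hws, hsk]
    · exact absurd ⟨s, by omega, hws⟩ hnm
  · rintro ⟨hinj, hlast⟩ t ht
    have ht' := Finset.mem_range.1 ht
    rw [hS]
    have hc : (A t).card = t + 1 := by
      have : (A t).card = (Finset.range (t + 1)).card := by
        apply Finset.card_image_of_injOn
        intro a ha b hb hab
        have ha' : a < t + 1 := by simpa using ha
        have hb' : b < t + 1 := by simpa using hb
        exact hinj a (by omega) b (by omega) hab
      simpa using this
    have hm : k + 1 ∈ A t ↔ t = k := by
      simp only [hA, Finset.mem_image, Finset.mem_range]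
      constructor
      · rintro ⟨s, hs, hws⟩
        have := hinj s (by omega) k (by omega) (by rw [hws, hlast])
        omega
      · rintro rfl
        exact ⟨t, by omega, hlast⟩
    simp only [hg, hm, hc]
    push_cast
    ring
end

section
/- Let G = (V,E) be a simple graph on vertex set {1,…,n} with n ≥ 2, and fix γ ∈ (0,1]. Then G contains a Hamiltonian path starting at vertex 1 and ending at vertex n if and only if there exists a search path w = (w_0,…,w_{n−1}) of length n−1 in G starting at vertex 1 whose discounted reward satisfies F(w) ≥ B. (This is the correctness of the polynomial-time reduction from 2HP underlying the NP-hardness of MESPP even for a grid graph, a stationary target, and a single searcher with perfect sensing.) -/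
theorem aux_sum_Icc (n : ℕ) (hn : 2 ≤ n) (b : ℕ → ℝ) (c e : ℝ) (h1 : b 1 = 0) (h2 : b n = e)
    (h3 : ∀ v, v ≠ 1 → v ≠ n → b v = c) :
    ∑ v ∈ Finset.Icc 1 n, b v = ((n : ℝ) - 2) * c + e := by
  have hI : Finset.Icc 1 n = insert 1 (insert n (Finset.Ioo 1 n)) := by
    ext x; simp; omega
  rw [hI, Finset.sum_insert (by simp; omega), Finset.sum_insert (by simp), h1, h2,
    Finset.sum_congr rfl (g := fun _ => c)
      (fun x hx => h3 x (by simp at hx; omega) (by simp at hx; omega))]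
  obtain ⟨m, rfl⟩ := Nat.exists_eq_add_of_le hn
  simp; ring

theorem aux_le (n : ℕ) (hn : 2 ≤ n) (b : ℕ → ℝ) (c e : ℝ) (h1 : b 1 = 0) (h2 : b n = e)
    (h3 : ∀ v, v ≠ 1 → v ≠ n → b v = c) (he : 0 < e) (hec : e < c) (w : ℕ → ℕ) (w0 : w 0 = 1)
    (t : ℕ) :
    ∑ v ∈ Finset.image w (Finset.range (t + 1)), b v ≤ t * c ∧
    (n ∈ Finset.image w (Finset.range (t + 1)) →
      ∑ v ∈ Finset.image w (Finset.range (t + 1)), b v < t * c) := by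
  set A := Finset.image w (Finset.range (t + 1)) with hA
  have h1A : 1 ∈ A := Finset.mem_image.2 ⟨0, by simp, w0⟩
  have hcard : ((A.erase 1).card : ℝ) * c ≤ t * c := by
    apply mul_le_mul_of_nonneg_right _ (by linarith)
    have h := Finset.card_image_le (s := Finset.range (t + 1)) (f := w)
    rw [← hA, Finset.card_range] at h
    have := Finset.card_erase_of_mem h1A
    exact_mod_cast (by omega : (A.erase 1).card ≤ t)
  have hs : ∑ v ∈ A, b v = ∑ v ∈ A.erase 1, b v := by
    rw [← Finset.add_sum_erase A b h1A, h1, zero_add]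
  have hle : ∀ v ∈ A.erase 1, b v ≤ c := by
    intro v hv
    by_cases hvn : v = n
    · rw [hvn, h2]; exact hec.le
    · exact (h3 v (Finset.ne_of_mem_erase hv) hvn).le
  have hcs : ∑ v ∈ A.erase 1, c = ((A.erase 1).card : ℝ) * c := by simp
  rw [hs]
  refine ⟨?_, fun hnA => ?_⟩
  · linarith [Finset.sum_le_sum hle]
  · have := Finset.sum_lt_sum hle
      ⟨n, Finset.mem_erase.2 ⟨by omega, hnA⟩, by rw [h2]; exact hec⟩
    linarith

theorem aux_main (n : ℕ) (hn : 2 ≤ n) (γ : ℝ) (hγ : 0 < γ)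
    (b : ℕ → ℝ) (c e : ℝ) (h1 : b 1 = 0) (h2 : b n = e)
    (h3 : ∀ v, v ≠ 1 → v ≠ n → b v = c) (he : 0 < e) (hec : e < c) (w : ℕ → ℕ) (w0 : w 0 = 1)
    (hw : ∀ t < n, w t ∈ Finset.Icc 1 n)
    (h : (∑ t ∈ Finset.range (n - 1), γ ^ t * t * c) + γ ^ (n - 1) * (((n : ℝ) - 2) * c + e)
      ≤ reward n γ b w) :
    (w (n - 1) = n) ∧ Finset.image w (Finset.range n) = Finset.Icc 1 n := by
  obtain ⟨m, rfl⟩ := Nat.exists_eq_add_of_le' hn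
  have hb : ∀ v, v ≠ 1 → 0 < b v := by
    intro v hv
    by_cases hvn : v = m + 2
    · rw [hvn, h2]; exact he
    · rw [h3 v hv hvn]; linarith
  have hb0 : ∀ v, 0 ≤ b v := by
    intro v
    by_cases hv : v = 1
    · rw [hv, h1]
    · exact (hb v hv).le
  have hle := aux_le (m + 2) hn b c e h1 h2 h3 he hec w w0
  have hsub : Finset.image w (Finset.range (m + 2)) ⊆ Finset.Icc 1 (m + 2) := by
    intro x hx
    obtain ⟨t, ht, rfl⟩ := Finset.mem_image.1 hx
    exact hw t (Finset.mem_range.1 ht)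
  have htot := aux_sum_Icc (m + 2) hn b c e h1 h2 h3
  have hlast : ∑ v ∈ Finset.image w (Finset.range (m + 2)), b v
      ≤ ∑ v ∈ Finset.Icc 1 (m + 2), b v :=
    Finset.sum_le_sum_of_subset_of_nonneg hsub (fun v _ _ => hb0 v)
  have e1 : m + 2 - 1 = m + 1 := rfl
  rw [reward, Finset.sum_range_succ, e1, ← htot] at h
  rw [Finset.sum_range_succ, Finset.sum_range_succ] at h
  have hfirst : ∑ t ∈ Finset.range m,
      γ ^ t * ∑ v ∈ Finset.image w (Finset.range (t + 1)), b v
      ≤ ∑ t ∈ Finset.range m, γ ^ t * t * c := by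
    apply Finset.sum_le_sum
    intro t _
    rw [mul_assoc]
    exact mul_le_mul_of_nonneg_left (hle t).1 (by positivity)
  have hmid := mul_le_mul_of_nonneg_left (hle m).1 (pow_pos hγ m).le
  have hl := mul_le_mul_of_nonneg_left hlast (pow_pos hγ (m + 1)).le
  have hA : Finset.image w (Finset.range (m + 2)) = Finset.Icc 1 (m + 2) := by
    by_contra hne
    obtain ⟨x, hx, hxn⟩ := Finset.exists_of_ssubset (hsub.ssubset_of_ne hne)
    have hx1 : x ≠ 1 := by
      rintro rfl
      exact hxn (Finset.mem_image.2 ⟨0, by simp, w0⟩)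
    have hlt : ∑ v ∈ Finset.image w (Finset.range (m + 2)), b v
        < ∑ v ∈ Finset.Icc 1 (m + 2), b v :=
      Finset.sum_lt_sum_of_subset hsub hx hxn (hb x hx1) (fun v _ _ => hb0 v)
    have := mul_lt_mul_of_pos_left hlt (pow_pos hγ (m + 1))
    linarith
  refine ⟨?_, hA⟩
  have hnm : m + 2 ∉ Finset.image w (Finset.range (m + 1)) := by
    intro hmem
    have := mul_lt_mul_of_pos_left ((hle m).2 hmem) (pow_pos hγ m)
    linarith
  have hmem : m + 2 ∈ Finset.image w (Finset.range (m + 2)) := by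
    rw [hA]; simp
  rw [Finset.range_add_one, Finset.image_insert, Finset.mem_insert] at hmem
  rcases hmem with h' | h'
  · exact h'.symm
  · exact absurd h' hnm

theorem aux_conv (n : ℕ) (hn : 2 ≤ n) (γ : ℝ)
    (b : ℕ → ℝ) (c e : ℝ) (h1 : b 1 = 0) (h2 : b n = e)
    (h3 : ∀ v, v ≠ 1 → v ≠ n → b v = c) (w : ℕ → ℕ) (w0 : w 0 = 1)
    (wn : w (n - 1) = n) (hinj : ∀ s < n, ∀ t < n, w s = w t → s = t) :
    (∑ t ∈ Finset.range (n - 1), γ ^ t * t * c) + γ ^ (n - 1) * (((n : ℝ) - 2) * c + e)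
      = reward n γ b w := by
  obtain ⟨m, rfl⟩ := Nat.exists_eq_add_of_le' hn
  have e1 : m + 2 - 1 = m + 1 := rfl
  rw [e1] at wn ⊢
  have hS : ∀ t < m + 2, ∑ v ∈ Finset.image w (Finset.range (t + 1)), b v
      = ∑ s ∈ Finset.range (t + 1), b (w s) := by
    intro t ht
    apply Finset.sum_image
    intro s hs u hu hsu
    simp at hs hu
    exact hinj s (by omega) u (by omega) hsu
  have hT : ∀ t < m + 1, ∑ s ∈ Finset.range (t + 1), b (w s) = t * c := by
    intro t ht
    rw [Finset.sum_range_succ', w0, h1, add_zero,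
      Finset.sum_congr rfl (g := fun _ => c)]
    · simp
    · intro s hs
      have hs := Finset.mem_range.1 hs
      apply h3
      · intro h
        have := hinj (s + 1) (by omega) 0 (by omega) (by rw [h, w0])
        omega
      · intro h
        have := hinj (s + 1) (by omega) (m + 1) (by omega) (by rw [h, wn])
        omega
  rw [reward, Finset.sum_range_succ _ (m + 1), hS (m + 1) (by omega),
    Finset.sum_range_succ (fun s => b (w s)) (m + 1),
    hT m (by omega), wn, h2]
  congr 1
  · apply Finset.sum_congr rfl
    intro t ht
    have ht := Finset.mem_range.1 ht
    rw [hS t (by omega), hT t ht, mul_assoc]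
  · push_cast; ring

/-- Correctness of the reduction from 2HP to MESPP-D: a simple graph on vertex set
`{1, …, n}` contains a Hamiltonian path from vertex `1` to vertex `n` iff there is a
search path of length `n−1` starting at vertex `1` (at each step the searcher stays
put or moves along an edge) whose discounted reward is at least `B`. -/
theorem twoHP_reduces_to_MESPP (n : ℕ) (hn : 2 ≤ n)
    (γ : ℝ) (hγ : γ ∈ Set.Ioc (0 : ℝ) 1)
    (G : SimpleGraph ℕ)
    (hG : ∀ u v : ℕ, G.Adj u v → u ∈ Finset.Icc 1 n ∧ v ∈ Finset.Icc 1 n) :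
    (∃ p : ℕ → ℕ,
        p 0 = 1 ∧ p (n - 1) = n ∧
        (∀ t < n - 1, G.Adj (p t) (p (t + 1))) ∧
        (∀ s < n, ∀ t < n, p s = p t → s = t) ∧
        (∀ v ∈ Finset.Icc 1 n, ∃ t < n, p t = v)) ↔
    (∃ w : ℕ → ℕ,
        (∀ t < n, w t ∈ Finset.Icc 1 n) ∧
        w 0 = 1 ∧
        (∀ t < n - 1, w (t + 1) = w t ∨ G.Adj (w t) (w (t + 1))) ∧
        Bval n γ ≤ reward n γ (bfun n) w) := by
  have hn1 : (0 : ℝ) < (n : ℝ) - 1 := by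
    have : (2 : ℝ) ≤ n := by exact_mod_cast hn
    linarith
  have he : 0 < 1 / ((n : ℝ) - 1) ^ 2 := by positivity
  have hec : 1 / ((n : ℝ) - 1) ^ 2 < 1 / ((n : ℝ) - 1) + 1 / ((n : ℝ) - 1) ^ 2 := by
    have : 0 < 1 / ((n : ℝ) - 1) := by positivity
    linarith
  have h1 : bfun n 1 = 0 := by simp [bfun]
  have h2 : bfun n n = 1 / ((n : ℝ) - 1) ^ 2 := by
    rw [bfun, if_neg (by omega), if_pos rfl]
  have h3 : ∀ v, v ≠ 1 → v ≠ n →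
      bfun n v = 1 / ((n : ℝ) - 1) + 1 / ((n : ℝ) - 1) ^ 2 := by
    intro v hv hvn
    rw [bfun, if_neg hv, if_neg hvn]
  constructor
  · rintro ⟨p, p0, pn, hadj, hinj, -⟩
    refine ⟨p, ?_, p0, fun t ht => Or.inr (hadj t ht),
      (aux_conv n hn γ (bfun n) _ _ h1 h2 h3 p p0 pn hinj).le⟩
    intro t ht
    by_cases h : t < n - 1
    · exact (hG _ _ (hadj t h)).1
    · have : t = n - 1 := by omega
      rw [this, pn]; simp; omega
  · rintro ⟨w, hw, w0, hstep, hB⟩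
    obtain ⟨wn, hA⟩ := aux_main n hn γ hγ.1 (bfun n) _ _ h1 h2 h3 he hec w w0 hw hB
    have hinj : Set.InjOn w (Finset.range n) := by
      apply Finset.injOn_of_card_image_eq
      rw [hA]; simp
    have hinj' : ∀ s < n, ∀ t < n, w s = w t → s = t := fun s hs t ht h =>
      hinj (by simpa using hs) (by simpa using ht) h
    refine ⟨w, w0, wn, ?_, hinj', ?_⟩
    · intro t ht
      rcases hstep t ht with h | h
      · have := hinj' (t + 1) (by omega) t (by omega) h
        omega
      · exact h
    · intro v hv
      rw [← hA] at hv
      obtain ⟨t, ht, rfl⟩ := Finset.mem_image.1 hv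
      exact ⟨t, Finset.mem_range.1 ht, rfl⟩
end
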